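/- arXiv:2406.13202 — 2 statements merged into one kernel-verified Lean document; each statement's English description precedes it below -/
import Mathlib

section
/- Let p and q be distinct primes and let G = (ℤ/p) × (ℤ/p) × (ℤ/q). Then G has exactly 2(p + 3) subgroups in total, and the number of ordered pairs (H, K) of subgroups of G with K covering H in the subgroup lattice (the number of edges of the subgroup lattice graph of G) is 5p + 7. -/
/-- Covering pairs in a product of two finite orders. -/
theorem aux_prod_cov (L S : Type) [PartialOrder L] [PartialOrder S] [Finite L] [Finite S] :
    Nat.card {HK : (L × S) × (L × S) // HK.1 ⋖ HK.2} =
      Nat.card {ab : L × L // ab.1 ⋖ ab.2} * Nat.card S +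
      Nat.card L * Nat.card {ab : S × S // ab.1 ⋖ ab.2} := by
  rw [← Nat.card_prod, ← Nat.card_prod, ← Nat.card_sum]
  symm
  refine Nat.card_eq_of_bijective (f := fun x => match x with
    | Sum.inl (ab, s) => ⟨((ab.1.1, s), (ab.1.2, s)), by
        rw [Prod.mk_covBy_mk_iff]; exact Or.inl ⟨ab.2, rfl⟩⟩
    | Sum.inr (a, st) => ⟨((a, st.1.1), (a, st.1.2)), by
        rw [Prod.mk_covBy_mk_iff]; exact Or.inr ⟨st.2, rfl⟩⟩) ⟨?_, ?_⟩
  · rintro (⟨⟨⟨a, b⟩, h⟩, s⟩ | ⟨a, ⟨⟨s, t⟩, h⟩⟩) (⟨⟨⟨a', b'⟩, h'⟩, s'⟩ | ⟨a', ⟨⟨s', t'⟩, h'⟩⟩) hh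
    · simp at hh ⊢; tauto
    · simp at hh
      obtain ⟨⟨rfl, rfl⟩, rfl, rfl⟩ := hh
      exact absurd rfl h.ne
    · simp at hh
      obtain ⟨⟨rfl, rfl⟩, rfl, rfl⟩ := hh
      exact absurd rfl h.ne
    · simp at hh ⊢; tauto
  · rintro ⟨⟨⟨a, s⟩, ⟨b, t⟩⟩, h⟩
    have h' := h
    rw [Prod.mk_covBy_mk_iff] at h'
    rcases h' with ⟨h1, h2⟩ | ⟨h1, h2⟩
    · change _ = _ at h2
      subst h2
      exact ⟨Sum.inl (⟨(a, b), h1⟩, s), rfl⟩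
    · change _ = _ at h2
      subst h2
      exact ⟨Sum.inr (a, ⟨(s, t), h1⟩), rfl⟩

/-- A bounded order of height two. -/
theorem aux_height_two (L : Type) [PartialOrder L] [BoundedOrder L] [Finite L]
    (h : ∀ x : L, x = ⊥ ∨ x = ⊤ ∨ IsAtom x) (ht : ¬ IsAtom (⊤ : L)) (hbt : (⊥ : L) ≠ ⊤) :
    Nat.card L = Nat.card {x : L // IsAtom x} + 2 ∧
    Nat.card {ab : L × L // ab.1 ⋖ ab.2} = 2 * Nat.card {x : L // IsAtom x} := by
  have hco : ∀ x : L, IsAtom x → x ⋖ ⊤ := by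
    intro x hx
    refine ⟨lt_top_iff_ne_top.2 (fun e => ht (e ▸ hx)), fun y hxy hy => ?_⟩
    rcases h y with rfl | rfl | h1
    · exact not_lt_bot hxy
    · exact lt_irrefl _ hy
    · exact hx.1 (h1.2 x hxy)
  constructor
  · have : Nat.card ({x : L // IsAtom x} ⊕ Bool) = Nat.card L := by
      refine Nat.card_eq_of_bijective (f := fun x => match x with
        | Sum.inl a => a.1
        | Sum.inr true => ⊤
        | Sum.inr false => ⊥) ⟨?_, ?_⟩
      · rintro (⟨a, ha⟩ | _ | _) (⟨b, hb⟩ | _ | _) hh <;> simp at hh ⊢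
        · exact hh
        · exact ha.1 hh
        · exact ht (hh ▸ ha)
        · exact hb.1 hh.symm
        · exact hbt hh
        · exact ht (hh ▸ hb)
        · exact hbt hh.symm
      · intro x
        rcases h x with rfl | rfl | h1
        · exact ⟨Sum.inr false, rfl⟩
        · exact ⟨Sum.inr true, rfl⟩
        · exact ⟨Sum.inl ⟨x, h1⟩, rfl⟩
    rw [← this, Nat.card_sum]; simp
  · rw [two_mul, ← Nat.card_sum]
    symm
    refine Nat.card_eq_of_bijective (f := fun x => match x with
        | Sum.inl a => ⟨(⊥, a.1), bot_covBy_iff.2 a.2⟩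
        | Sum.inr a => ⟨(a.1, ⊤), hco _ a.2⟩) ⟨?_, ?_⟩
    · rintro (⟨a, ha⟩ | ⟨a, ha⟩) (⟨b, hb⟩ | ⟨b, hb⟩) hh <;> simp at hh ⊢
      · exact hh
      · exact hb.1 hh.1.symm
      · exact ha.1 hh.1
      · exact hh
    · rintro ⟨⟨a, b⟩, hab⟩
      simp only at hab
      rcases h a with rfl | rfl | h1
      · exact ⟨Sum.inl ⟨b, bot_covBy_iff.1 hab⟩, rfl⟩
      · exact absurd hab.lt not_top_lt
      · rcases h b with rfl | rfl | h2
        · exact absurd hab.lt not_lt_bot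
        · exact ⟨Sum.inr ⟨a, h1⟩, rfl⟩
        · exact absurd (h2.2 a hab.lt) h1.1

theorem aux_simple (S : Type) [PartialOrder S] [BoundedOrder S] [IsSimpleOrder S] :
    Nat.card S = 2 ∧ Nat.card {ab : S × S // ab.1 ⋖ ab.2} = 1 := by
  classical
  constructor
  · rw [Nat.card_congr (IsSimpleOrder.equivBool (α := S))]; simp
  · rw [Nat.card_eq_one_iff_unique]
    refine ⟨⟨?_⟩, ⟨⟨(⊥, ⊤), bot_covBy_top⟩⟩⟩
    have key : ∀ a b : S, a ⋖ b → a = ⊥ ∧ b = ⊤ := by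
      intro a b hab
      rcases eq_bot_or_eq_top a with rfl | rfl
      · rcases eq_bot_or_eq_top b with rfl | rfl
        · exact absurd rfl hab.ne
        · exact ⟨rfl, rfl⟩
      · exact absurd hab.lt not_top_lt
    rintro ⟨⟨a, b⟩, h⟩ ⟨⟨a', b'⟩, h'⟩
    obtain ⟨rfl, rfl⟩ := key _ _ h
    obtain ⟨rfl, rfl⟩ := key _ _ h'
    rfl

theorem aux_plane (p : ℕ) [Fact p.Prime] :
    Nat.card (AddSubgroup (ZMod p × ZMod p)) = p + 3 ∧
    Nat.card {ab : AddSubgroup (ZMod p × ZMod p) × AddSubgroup (ZMod p × ZMod p) //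
      ab.1 ⋖ ab.2} = 2 * (p + 1) := by
  let e : AddSubgroup (ZMod p × ZMod p) ≃o Submodule (ZMod p) (ZMod p × ZMod p) :=
    AddSubgroup.toZModSubmodule p
  have hfr : Module.finrank (ZMod p) (ZMod p × ZMod p) = 2 := by simp
  have hat : ∀ x : Submodule (ZMod p) (ZMod p × ZMod p),
      IsAtom x ↔ Module.finrank (ZMod p) x = 1 := fun x => by
    exact Submodule.isAtom_iff_finrank_eq_one
  have hcard : Nat.card {x : Submodule (ZMod p) (ZMod p × ZMod p) // IsAtom x} = p + 1 := by
    have h1 := Projectivization.card_of_finrank_two (ZMod p) (ZMod p × ZMod p) hfr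
    rw [Nat.card_congr (Projectivization.equivSubmodule (ZMod p) (ZMod p × ZMod p))] at h1
    simp only [hat]
    simpa using h1
  have hA : Nat.card {x : AddSubgroup (ZMod p × ZMod p) // IsAtom x} = p + 1 := by
    rw [← hcard]
    exact Nat.card_congr (e.toEquiv.subtypeEquiv (fun a => (e.isAtom_iff a).symm))
  have := aux_height_two (AddSubgroup (ZMod p × ZMod p)) ?_ ?_ ?_
  · rw [hA] at this
    exact this
  · intro x
    rw [← e.isAtom_iff, hat, ← map_eq_bot_iff e, ← map_eq_top_iff e]
    generalize e x = y
    have hle := Submodule.finrank_le y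
    rw [hfr] at hle
    interval_cases hy : Module.finrank (ZMod p) y
    · exact Or.inl (Submodule.finrank_eq_zero.1 hy)
    · simp
    · exact Or.inr (Or.inl (Submodule.eq_top_of_finrank_eq (by rw [hy, hfr])))
  · rw [← e.isAtom_iff, hat, e.map_top, finrank_top, hfr]; norm_num
  · exact bot_ne_top

theorem aux_iso (p q : ℕ) (hc : Nat.Coprime p q) :
    Nonempty (AddSubgroup (ZMod p × ZMod p) × AddSubgroup (ZMod q) ≃o
      AddSubgroup (ZMod p × ZMod p × ZMod q)) := by
  have h0 : AddSubgroup ((ZMod p × ZMod p) × ZMod q) ≃o AddSubgroup (ZMod p × ZMod p × ZMod q) :=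
    AddEquiv.mapAddSubgroup (AddEquiv.prodAssoc)
  refine ⟨OrderIso.trans ?_ h0⟩
  let f : AddSubgroup (ZMod p × ZMod p) × AddSubgroup (ZMod q) ↪o
      AddSubgroup ((ZMod p × ZMod p) × ZMod q) :=
    OrderEmbedding.ofMapLEIff (fun x => x.1.prod x.2) (by
      rintro ⟨a, b⟩ ⟨c, d⟩
      constructor
      · intro h
        refine ⟨fun x hx => ?_, fun x hx => ?_⟩
        · exact (h (show (x, 0) ∈ a.prod b from ⟨hx, b.zero_mem⟩)).1
        · exact (h (show (0, x) ∈ a.prod b from ⟨a.zero_mem, hx⟩)).2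
      · rintro ⟨h1, h2⟩ x ⟨hx, hy⟩
        exact ⟨h1 hx, h2 hy⟩)
  refine RelIso.ofSurjective f ?_
  intro H
  have key : ∀ a b, (a, b) ∈ H → (a, (0 : ZMod q)) ∈ H ∧ ((0 : ZMod p × ZMod p), b) ∈ H := by
    intro a b h
    obtain ⟨n, hn1, hn2⟩ := Nat.chineseRemainder hc 1 0
    have e1 : (n : ZMod p) = 1 := by
      have := (ZMod.natCast_eq_natCast_iff n 1 p).2 hn1
      simpa using this
    have e2 : (n : ZMod q) = 0 := by
      have := (ZMod.natCast_eq_natCast_iff n 0 q).2 hn2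
      simpa using this
    have h3 : n • (a, b) = (a, (0 : ZMod q)) := by
      ext <;> simp [e1, e2]
    have h4 : (a, (0 : ZMod q)) ∈ H := h3 ▸ H.nsmul_mem h n
    refine ⟨h4, ?_⟩
    have := H.sub_mem h h4
    simpa using this
  refine ⟨(H.map (AddMonoidHom.fst _ _), H.map (AddMonoidHom.snd _ _)), ?_⟩
  change AddSubgroup.prod _ _ = H
  ext ⟨a, b⟩
  rw [AddSubgroup.mem_prod]
  constructor
  · rintro ⟨⟨⟨a1, b1⟩, h1, e1⟩, ⟨⟨a2, b2⟩, h2, e2⟩⟩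
    simp at e1 e2
    subst e1 e2
    have := H.add_mem (key _ _ h1).1 (key _ _ h2).2
    simpa using this
  · intro h
    exact ⟨⟨_, h, rfl⟩, ⟨_, h, rfl⟩⟩

theorem stmt_15 (p q : ℕ) (hp : p.Prime) (hq : q.Prime) (hpq : p ≠ q) :
    Nat.card (AddSubgroup (ZMod p × ZMod p × ZMod q)) = 2 * (p + 3) ∧
    Nat.card {HK : AddSubgroup (ZMod p × ZMod p × ZMod q) ×
        AddSubgroup (ZMod p × ZMod p × ZMod q) // HK.1 ⋖ HK.2} = 5 * p + 7 := by
  have : Fact p.Prime := ⟨hp⟩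
  have : Fact q.Prime := ⟨hq⟩
  obtain ⟨e⟩ := aux_iso p q ((Nat.coprime_primes hp hq).2 hpq)
  obtain ⟨h1, h2⟩ := aux_plane p
  have : IsSimpleOrder (AddSubgroup (ZMod q)) :=
    (AddSubgroup.toZModSubmodule q (M := ZMod q)).isSimpleOrder_iff.2 inferInstance
  obtain ⟨h3, h4⟩ := aux_simple (AddSubgroup (ZMod q))
  constructor
  · rw [← Nat.card_congr e.toEquiv, Nat.card_prod, h1, h3]; ring
  · rw [← Nat.card_congr ((e.toEquiv.prodCongr e.toEquiv).subtypeEquiv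
      (p := fun HK => HK.1 ⋖ HK.2) (fun a => (apply_covBy_apply_iff e).symm)),
      aux_prod_cov, h1, h2, h3, h4]
    ring
end

section
/- Let q be a prime with q ≠ 2 and let G = (ℤ/4) × (ℤ/4) × (ℤ/q). Then G has exactly 30 subgroups, and the number of ordered pairs (H, K) of subgroups of G with K covering H in the subgroup lattice (the number of edges of the subgroup lattice graph of G) is 63. -/
/-- Bitmasks of the fifteen subgroups of `ZMod 4 × ZMod 4`; bit `4 x + y` stands for `(x, y)`. -/
def lat_mask (i : Fin 15) : ℕ :=
  (([1, 5, 257, 1025, 15, 1285, 2565, 4369, 9345, 16705, 33825, 3855, 21845, 42405, 65535] : List ℕ)).getD i.val 0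

def lat_mem (i : Fin 15) (x y : ZMod 4) : Bool := (lat_mask i).testBit (4 * x.val + y.val)

def lat_le (i j : Fin 15) : Bool := (lat_mask i) &&& (lat_mask j) == lat_mask i

theorem lat_mem_zero : ∀ i, lat_mem i 0 0 = true := by decide +kernel

theorem lat_mem_add : ∀ i, ∀ x y : ZMod 4, lat_mem i x y = true → ∀ z w : ZMod 4,
    lat_mem i z w = true → lat_mem i (x + z) (y + w) = true := by decide +kernel

theorem lat_mem_neg : ∀ i, ∀ x y : ZMod 4, lat_mem i x y = true →
    lat_mem i (-x) (-y) = true := by decide +kernel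

theorem lat_le_iff : ∀ i j, lat_le i j = true ↔
    ∀ x y : ZMod 4, lat_mem i x y = true → lat_mem j x y = true := by decide +kernel

theorem lat_le_antisymm : ∀ i j, lat_le i j = true → lat_le j i = true → i = j := by decide +kernel

theorem lat_step : ∀ i, ∀ x y : ZMod 4, lat_mem i x y = false → ∃ j : Fin 15, i < j ∧
    ∀ z w : ZMod 4, lat_mem j z w = true →
      ∃ k : Fin 4, lat_mem i (z - k.val • x) (w - k.val • y) = true := by decide +kernel

def lat_ple (a b : Fin 15 × Bool) : Bool := lat_le a.1 b.1 && (!a.2 || b.2)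

def lat_plt (a b : Fin 15 × Bool) : Bool := lat_ple a b && !lat_ple b a

def lat_cov (a b : Fin 15 × Bool) : Prop :=
  lat_plt a b = true ∧ ∀ c, ¬ (lat_plt a c = true ∧ lat_plt c b = true)

instance : DecidablePred (fun p : (Fin 15 × Bool) × (Fin 15 × Bool) => lat_cov p.1 p.2) :=
  fun p => inferInstanceAs (Decidable (_ ∧ _))

theorem lat_count : Fintype.card
    {p : (Fin 15 × Bool) × (Fin 15 × Bool) // lat_cov p.1 p.2} = 63 := by decide +kernel

def lat_S (q : ℕ) (a : Fin 15 × Bool) : AddSubgroup (ZMod 4 × ZMod 4 × ZMod q) where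
  carrier := {g | lat_mem a.1 g.1 g.2.1 = true ∧ (a.2 = true ∨ g.2.2 = 0)}
  zero_mem' := ⟨lat_mem_zero _, Or.inr rfl⟩
  add_mem' := by
    rintro g h ⟨h1, h2⟩ ⟨h3, h4⟩
    refine ⟨lat_mem_add _ _ _ h1 _ _ h3, ?_⟩
    rcases h2 with h2 | h2
    · exact Or.inl h2
    · rcases h4 with h4 | h4
      · exact Or.inl h4
      · right; simp [h2, h4]
  neg_mem' := by
    rintro g ⟨h1, h2⟩
    refine ⟨lat_mem_neg _ _ _ h1, ?_⟩
    rcases h2 with h2 | h2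
    · exact Or.inl h2
    · right; simp [h2]

theorem lat_S_mem (q : ℕ) (a : Fin 15 × Bool) (x y : ZMod 4) (z : ZMod q) :
    (x, y, z) ∈ lat_S q a ↔ lat_mem a.1 x y = true ∧ (a.2 = true ∨ z = 0) := Iff.rfl

theorem lat_S_le (q : ℕ) [Fact q.Prime] (a b : Fin 15 × Bool) :
    lat_S q a ≤ lat_S q b ↔ lat_ple a b = true := by
  obtain ⟨i, s⟩ := a
  obtain ⟨j, t⟩ := b
  constructor
  · intro h
    have h1 : lat_le i j = true := by
      rw [lat_le_iff]
      intro x y hxy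
      exact ((lat_S_mem q _ _ _ _).1 (h ((lat_S_mem q _ x y 0).2 ⟨hxy, Or.inr rfl⟩))).1
    have h2 : s = true → t = true := by
      intro hs
      have := ((lat_S_mem q _ _ _ _).1
        (h ((lat_S_mem q (i, s) 0 0 1).2 ⟨lat_mem_zero _, Or.inl hs⟩))).2
      simpa using this
    cases s <;> cases t <;> simp_all [lat_ple]
  · intro h
    have h1 : lat_le i j = true ∧ (s = true → t = true) := by
      cases s <;> cases t <;> simp_all [lat_ple]
    rintro ⟨x, y, z⟩ hg
    rw [lat_S_mem] at hg ⊢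
    exact ⟨(lat_le_iff i j).1 h1.1 x y hg.1, hg.2.imp_left h1.2⟩

theorem lat_S_inj (q : ℕ) [Fact q.Prime] : Function.Injective (lat_S q) := by
  intro a b h
  have h1 := (lat_S_le q a b).1 h.le
  have h2 := (lat_S_le q b a).1 h.ge
  obtain ⟨i, s⟩ := a
  obtain ⟨j, t⟩ := b
  have h3 : i = j := by
    apply lat_le_antisymm
    · simp [lat_ple] at h1; exact h1.1
    · simp [lat_ple] at h2; exact h2.1
  cases s <;> cases t <;> simp_all [lat_ple]

/-- Every subgroup of `ZMod 4 × ZMod 4` is in the list. -/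
theorem lat_class (K : AddSubgroup (ZMod 4 × ZMod 4)) :
    ∃ i, ∀ x y, (x, y) ∈ K ↔ lat_mem i x y = true := by
  classical
  let T : Finset (Fin 15) := Finset.univ.filter (fun i => ∀ x y, lat_mem i x y = true → (x, y) ∈ K)
  have hT : T.Nonempty := by
    refine ⟨0, ?_⟩
    simp only [T, Finset.mem_filter, Finset.mem_univ, true_and]
    intro x y h
    have : ∀ x y : ZMod 4, lat_mem 0 x y = true → x = 0 ∧ y = 0 := by decide +kernel
    obtain ⟨rfl, rfl⟩ := this x y h
    exact K.zero_mem
  obtain ⟨i, hi, hmax⟩ := T.exists_max_image id hT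
  have hiK : ∀ x y, lat_mem i x y = true → (x, y) ∈ K := by
    simpa [T] using hi
  refine ⟨i, fun x y => ⟨fun hxy => ?_, hiK x y⟩⟩
  by_contra hn
  obtain ⟨j, hij, hj⟩ := lat_step i x y (by simpa using hn)
  refine absurd (hmax j ?_) (not_le.2 hij)
  simp only [T, Finset.mem_filter, Finset.mem_univ, true_and]
  intro z w hzw
  obtain ⟨k, hk⟩ := hj z w hzw
  have := K.add_mem (hiK _ _ hk) (K.nsmul_mem hxy k.val)
  simpa using this

theorem lat_S_surj (q : ℕ) [Fact q.Prime] (hq2 : q ≠ 2) : Function.Surjective (lat_S q) := by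
  classical
  intro H
  have hq : q.Prime := Fact.out
  have hcop : Nat.Coprime 4 q := by
    have : Nat.Coprime 2 q := (Nat.coprime_primes Nat.prime_two hq).2 (Ne.symm hq2)
    exact Nat.Coprime.pow_left 2 this
  obtain ⟨n, hn4, hnq⟩ := Nat.chineseRemainder hcop 1 0
  have e4 : (n : ZMod 4) = 1 := by
    have := (ZMod.natCast_eq_natCast_iff n 1 4).2 hn4
    simpa using this
  have eq0 : (n : ZMod q) = 0 := by
    have := (ZMod.natCast_eq_natCast_iff n 0 q).2 hnq
    simpa using this
  have key : ∀ x y z, (x, y, z) ∈ H → (x, y, (0 : ZMod q)) ∈ H := by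
    intro x y z h
    have := H.nsmul_mem h n
    simpa [nsmul_eq_mul, e4, eq0] using this
  have key2 : ∀ x y z, (x, y, z) ∈ H → ((0 : ZMod 4), (0 : ZMod 4), z) ∈ H := by
    intro x y z h
    have := H.sub_mem h (key x y z h)
    simpa using this
  have key3 : ∀ z c : ZMod q, ((0 : ZMod 4), (0 : ZMod 4), z) ∈ H →
      ((0 : ZMod 4), (0 : ZMod 4), c * z) ∈ H := by
    intro z c h
    have := H.nsmul_mem h c.val
    simpa [nsmul_eq_mul] using this
  let K : AddSubgroup (ZMod 4 × ZMod 4) :=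
    { carrier := {p | (p.1, p.2, (0 : ZMod q)) ∈ H}
      zero_mem' := H.zero_mem
      add_mem' := by
        intro a b ha hb
        have := H.add_mem ha hb
        simpa using this
      neg_mem' := by
        intro a ha
        have := H.neg_mem ha
        simpa using this }
  obtain ⟨i, hi⟩ := lat_class K
  have hi' : ∀ x y, (x, y, (0 : ZMod q)) ∈ H ↔ lat_mem i x y = true := hi
  refine ⟨(i, decide (((0 : ZMod 4), (0 : ZMod 4), (1 : ZMod q)) ∈ H)), ?_⟩
  ext ⟨x, y, z⟩
  rw [lat_S_mem]
  simp only [decide_eq_true_eq, ← hi']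
  constructor
  · rintro ⟨h1, h2 | rfl⟩
    · have := H.add_mem h1 (key3 1 z h2)
      simpa using this
    · exact h1
  · intro h
    refine ⟨key _ _ _ h, ?_⟩
    by_cases hz : z = 0
    · exact Or.inr hz
    · left
      have := key3 z z⁻¹ (key2 _ _ _ h)
      rwa [inv_mul_cancel₀ hz] at this

theorem stmt_17 (q : ℕ) (hq : q.Prime) (hq2 : q ≠ 2) :
    Nat.card (AddSubgroup (ZMod 4 × ZMod 4 × ZMod q)) = 30 ∧
    Nat.card {HK : AddSubgroup (ZMod 4 × ZMod 4 × ZMod q) ×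
        AddSubgroup (ZMod 4 × ZMod 4 × ZMod q) // HK.1 ⋖ HK.2} = 63 := by
  have : Fact q.Prime := ⟨hq⟩
  let e : Fin 15 × Bool ≃ AddSubgroup (ZMod 4 × ZMod 4 × ZMod q) :=
    Equiv.ofBijective (lat_S q) ⟨lat_S_inj q, lat_S_surj q hq2⟩
  have hlt : ∀ a b, lat_plt a b = true ↔ e a < e b := by
    intro a b
    have h1 : e a ≤ e b ↔ lat_ple a b = true := lat_S_le q a b
    have h2 : e b ≤ e a ↔ lat_ple b a = true := lat_S_le q b a
    rw [lt_iff_le_not_ge, h1, h2]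
    simp [lat_plt]
  constructor
  · rw [← Nat.card_congr e]
    simp
  · rw [← lat_count, ← Nat.card_eq_fintype_card]
    refine (Nat.card_congr (Equiv.subtypeEquiv (e.prodCongr e) ?_)).symm
    rintro ⟨a, b⟩
    change lat_cov a b ↔ e a ⋖ e b
    unfold lat_cov CovBy
    rw [hlt]
    refine and_congr Iff.rfl ⟨fun h c h1 h2 => ?_, fun h c hc => ?_⟩
    · obtain ⟨c, rfl⟩ := e.surjective c
      exact h c ⟨(hlt _ _).2 h1, (hlt _ _).2 h2⟩
    · exact h ((hlt _ _).1 hc.1) ((hlt _ _).1 hc.2)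
end
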